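/- Up to isomorphism, the 2-dimensional endo-commutative straight algebras of rank 1 over a field K are exactly: S(0,0,0,0,0,0), S(0,0,0,0,0,1), S(0,0,0,1,0,λ) for λ ∈ K (pairwise non-isomorphic for distinct λ), and S(0,1,0,1,0,1); i.e., every such algebra is isomorphic to exactly one in this list. -/

import Mathlib

/-- The bilinear multiplication on K² (basis e = (1,0), f = (0,1)) with structure constants
e² = a₁e+b₁f, f² = a₂e+b₂f, ef = a₃e+b₃f, fe = a₄e+b₄f. -/
def mulG {K : Type*} [Field K] (a₁ b₁ a₂ b₂ a₃ b₃ a₄ b₄ : K)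
    (x y : K × K) : K × K :=
  (x.1*y.1*a₁ + x.1*y.2*a₃ + x.2*y.1*a₄ + x.2*y.2*a₂,
   x.1*y.1*b₁ + x.1*y.2*b₃ + x.2*y.1*b₄ + x.2*y.2*b₂)

/-- The algebra S(p,q,a,b,c,d): e² = f, f² = pe+qf, ef = ae+bf, fe = ce+df. -/
def mulS {K : Type*} [Field K] (p q a b c d : K) : K × K → K × K → K × K :=
  mulG 0 1 p q a b c d

/-- Endo-commutativity: (xy)² = x²y² for all x, y. -/
def IsEC {K : Type*} [Field K] (m : K × K → K × K → K × K) : Prop :=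
  ∀ x y : K × K, m (m x y) (m x y) = m (m x x) (m y y)

/-- Straightness: some x has x, x² linearly independent. -/
def IsStraight {K : Type*} [Field K] (m : K × K → K × K → K × K) : Prop :=
  ∃ x : K × K, LinearIndependent K ![x, m x x]

/-- The 4×2 structure matrix of the algebra with the given structure constants. -/
def structMatrix {K : Type*} [Field K] (a₁ b₁ a₂ b₂ a₃ b₃ a₄ b₄ : K) :
    Matrix (Fin 4) (Fin 2) K :=
  !![a₁, b₁; a₂, b₂; a₃, b₃; a₄, b₄]

/-- Isomorphism of algebras on K²: a bijective linear map preserving multiplication. -/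
def AlgIso {K : Type*} [Field K] (m₁ m₂ : K × K → K × K → K × K) : Prop :=
  ∃ φ : (K × K) ≃ₗ[K] (K × K), ∀ u v : K × K, φ (m₁ u v) = m₂ (φ u) (φ v)

lemma aux_minor {K : Type*} [Field K] (M : Matrix (Fin 4) (Fin 2) K) (h : M.rank = 1)
    (i j : Fin 4) : M i 0 * M j 1 - M i 1 * M j 0 = 0 := by
  by_contra hne
  have h1 : (M.submatrix ![i, j] (Equiv.refl (Fin 2))).rank = 2 := by
    have : IsUnit (M.submatrix ![i, j] (Equiv.refl (Fin 2))) := by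
      rw [Matrix.isUnit_iff_isUnit_det, isUnit_iff_ne_zero, Matrix.det_fin_two]
      simpa using hne
    simpa using Matrix.rank_of_isUnit _ this
  have h2 := Matrix.rank_submatrix_le M ![i, j] (Equiv.refl (Fin 2))
  omega

lemma aux_iso {K : Type*} [Field K] (a₁ b₁ a₂ b₂ a₃ b₃ a₄ b₄ : K) (e1 e2 f1 f2 q b d : K)
    (hD : e1 * f2 - e2 * f1 ≠ 0)
    (h1 : mulG a₁ b₁ a₂ b₂ a₃ b₃ a₄ b₄ (e1, e2) (e1, e2) = (f1, f2))
    (h2 : mulG a₁ b₁ a₂ b₂ a₃ b₃ a₄ b₄ (f1, f2) (f1, f2) = (q * f1, q * f2))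
    (h3 : mulG a₁ b₁ a₂ b₂ a₃ b₃ a₄ b₄ (e1, e2) (f1, f2) = (b * f1, b * f2))
    (h4 : mulG a₁ b₁ a₂ b₂ a₃ b₃ a₄ b₄ (f1, f2) (e1, e2) = (d * f1, d * f2)) :
    AlgIso (mulG a₁ b₁ a₂ b₂ a₃ b₃ a₄ b₄) (mulS 0 q 0 b 0 d) := by
  let ψ : (K × K) ≃ₗ[K] (K × K) :=
    { toFun := fun x => (x.1 * e1 + x.2 * f1, x.1 * e2 + x.2 * f2)
      invFun := fun x => ((x.1 * f2 - x.2 * f1) / (e1 * f2 - e2 * f1),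
        (e1 * x.2 - e2 * x.1) / (e1 * f2 - e2 * f1))
      map_add' := by intro x y; ext <;> simp <;> ring
      map_smul' := by intro c x; ext <;> simp <;> ring
      left_inv := by intro x; ext <;> simp <;> rw [div_eq_iff hD] <;> ring
      right_inv := by
        intro x
        ext <;> simp <;> rw [div_mul_eq_mul_div, div_mul_eq_mul_div, ← add_div, div_eq_iff hD] <;>
          ring }
  have key : ∀ x y, ψ (mulS 0 q 0 b 0 d x y) =
      mulG a₁ b₁ a₂ b₂ a₃ b₃ a₄ b₄ (ψ x) (ψ y) := by
    rintro ⟨x1, x2⟩ ⟨y1, y2⟩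
    simp only [mulG, Prod.mk.injEq] at h1 h2 h3 h4
    obtain ⟨h1, h1'⟩ := h1
    obtain ⟨h2, h2'⟩ := h2
    obtain ⟨h3, h3'⟩ := h3
    obtain ⟨h4, h4'⟩ := h4
    ext
    · simp only [mulS, mulG, ψ, LinearEquiv.coe_mk, LinearMap.coe_mk, AddHom.coe_mk]
      linear_combination (-x1*y1)*h1 - x2*y2*h2 - x1*y2*h3 - x2*y1*h4
    · simp only [mulS, mulG, ψ, LinearEquiv.coe_mk, LinearMap.coe_mk, AddHom.coe_mk]
      linear_combination (-x1*y1)*h1' - x2*y2*h2' - x1*y2*h3' - x2*y1*h4'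
  refine ⟨ψ.symm, fun u v => ?_⟩
  apply ψ.injective
  rw [key]
  simp

/-- Rescaling. -/
lemma aux_iso_scale {K : Type*} [Field K] (a₁ b₁ a₂ b₂ a₃ b₃ a₄ b₄ : K) (e1 e2 f1 f2 q b d : K)
    (hD : e1 * f2 - e2 * f1 ≠ 0)
    (h1 : mulG a₁ b₁ a₂ b₂ a₃ b₃ a₄ b₄ (e1, e2) (e1, e2) = (f1, f2))
    (h2 : mulG a₁ b₁ a₂ b₂ a₃ b₃ a₄ b₄ (f1, f2) (f1, f2) = (q * f1, q * f2))
    (h3 : mulG a₁ b₁ a₂ b₂ a₃ b₃ a₄ b₄ (e1, e2) (f1, f2) = (b * f1, b * f2))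
    (h4 : mulG a₁ b₁ a₂ b₂ a₃ b₃ a₄ b₄ (f1, f2) (e1, e2) = (d * f1, d * f2))
    (s : K) (hs : s ≠ 0) :
    AlgIso (mulG a₁ b₁ a₂ b₂ a₃ b₃ a₄ b₄) (mulS 0 (s^2 * q) 0 (s * b) 0 (s * d)) := by
  simp only [mulG, Prod.mk.injEq] at h1 h2 h3 h4
  apply aux_iso a₁ b₁ a₂ b₂ a₃ b₃ a₄ b₄ (s * e1) (s * e2) (s^2 * f1) (s^2 * f2)
  · have : s * e1 * (s^2 * f2) - s * e2 * (s^2 * f1) = s^3 * (e1 * f2 - e2 * f1) := by ring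
    rw [this]
    exact mul_ne_zero (pow_ne_zero _ hs) hD
  · ext <;> simp only [mulG]
    · linear_combination s^2 * h1.1
    · linear_combination s^2 * h1.2
  · ext <;> simp only [mulG]
    · linear_combination s^4 * h2.1
    · linear_combination s^4 * h2.2
  · ext <;> simp only [mulG]
    · linear_combination s^3 * h3.1
    · linear_combination s^3 * h3.2
  · ext <;> simp only [mulG]
    · linear_combination s^3 * h4.1
    · linear_combination s^3 * h4.2

lemma aux_par {K : Type*} [Field K] (f1 f2 g1 g2 : K) (hf : f1 ≠ 0 ∨ f2 ≠ 0)
    (h : f1 * g2 - f2 * g1 = 0) : ∃ c, g1 = c * f1 ∧ g2 = c * f2 := by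
  rcases hf with hf | hf
  · refine ⟨g1 / f1, by field_simp, ?_⟩
    field_simp
    linear_combination h
  · refine ⟨g2 / f2, ?_, by field_simp⟩
    field_simp
    linear_combination -h

lemma aux_noniso {K : Type*} [Field K] (b d q' b' d' : K)
    (h : AlgIso (mulS (0:K) 0 0 b 0 d) (mulS 0 q' 0 b' 0 d')) :
    q' = 0 ∧ ∃ α : K, α ≠ 0 ∧ b = α * b' ∧ d = α * d' := by
  obtain ⟨φ, h⟩ := h
  have hee := h (1, 0) (1, 0)
  have hef := h (1, 0) (0, 1)
  have hfe := h (0, 1) (1, 0)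
  have hff := h (0, 1) (0, 1)
  have e2 : ∀ t : K, φ (0, t) = t • φ (0, 1) := fun t => by rw [← map_smul]; simp
  simp only [mulS, mulG] at hee hef hfe hff
  simp only [mul_zero, mul_one, add_zero, zero_add, zero_mul, one_mul] at hee hef hfe hff
  rw [e2] at hef hfe hff
  obtain ⟨α, β⟩ : ∃ p : K × K, p = φ (1, 0) := ⟨_, rfl⟩
  rcases hE : φ (1, 0) with ⟨α, β⟩
  rcases hF : φ (0, 1) with ⟨γ, δ⟩
  rw [hE, hF] at hef hfe
  rw [hF] at hff
  rw [hE, hF] at hee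
  simp only [Prod.mk.injEq, Prod.smul_mk, smul_eq_mul] at hee hef hfe hff
  obtain ⟨rfl, hee⟩ := hee
  have hδ : δ ≠ 0 := by
    rintro rfl
    have : φ (0, 1) = φ 0 := by rw [hF, map_zero]; rfl
    have := φ.injective this
    simp at this
  have hα : α ≠ 0 := by
    rintro rfl
    have : φ (δ, -β) = φ 0 := by
      have : ((δ, -β) : K × K) = δ • (1, 0) + (-β) • (0, 1) := by simp
      rw [this, map_add, map_smul, map_smul, hE, hF, map_zero]
      ext <;> simp
      ring
    have := φ.injective this
    simp [hδ] at this
  have hq : q' = 0 := by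
    have := hff.2
    simp at this
    tauto
  subst hq
  refine ⟨rfl, α, hα, ?_, ?_⟩
  · apply mul_right_cancel₀ hδ
    linear_combination hef.2
  · apply mul_right_cancel₀ hδ
    linear_combination hfe.2

lemma aux_class {K : Type*} [Field K] (a₁ b₁ a₂ b₂ a₃ b₃ a₄ b₄ : K)
    (hEC : IsEC (mulG a₁ b₁ a₂ b₂ a₃ b₃ a₄ b₄))
    (hS : IsStraight (mulG a₁ b₁ a₂ b₂ a₃ b₃ a₄ b₄))
    (hR : (structMatrix a₁ b₁ a₂ b₂ a₃ b₃ a₄ b₄).rank = 1) :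
      (AlgIso (mulG a₁ b₁ a₂ b₂ a₃ b₃ a₄ b₄) (mulS 0 0 0 0 0 0) ∨
       AlgIso (mulG a₁ b₁ a₂ b₂ a₃ b₃ a₄ b₄) (mulS 0 0 0 0 0 1) ∨
       (∃ l : K, AlgIso (mulG a₁ b₁ a₂ b₂ a₃ b₃ a₄ b₄) (mulS 0 0 0 1 0 l)) ∨
       AlgIso (mulG a₁ b₁ a₂ b₂ a₃ b₃ a₄ b₄) (mulS 0 1 0 1 0 1)) := by
  have hm := aux_minor _ hR
  have m01 : a₁ * b₂ - b₁ * a₂ = 0 := by simpa [structMatrix] using hm 0 1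
  have m02 : a₁ * b₃ - b₁ * a₃ = 0 := by simpa [structMatrix] using hm 0 2
  have m03 : a₁ * b₄ - b₁ * a₄ = 0 := by simpa [structMatrix] using hm 0 3
  have m12 : a₂ * b₃ - b₂ * a₃ = 0 := by simpa [structMatrix] using hm 1 2
  have m13 : a₂ * b₄ - b₂ * a₄ = 0 := by simpa [structMatrix] using hm 1 3
  have m23 : a₃ * b₄ - b₃ * a₄ = 0 := by simpa [structMatrix] using hm 2 3
  have hpar : ∀ x y z w : K × K,
      (mulG a₁ b₁ a₂ b₂ a₃ b₃ a₄ b₄ x y).1 * (mulG a₁ b₁ a₂ b₂ a₃ b₃ a₄ b₄ z w).2 -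
      (mulG a₁ b₁ a₂ b₂ a₃ b₃ a₄ b₄ x y).2 * (mulG a₁ b₁ a₂ b₂ a₃ b₃ a₄ b₄ z w).1 = 0 := by
    rintro ⟨x1, x2⟩ ⟨y1, y2⟩ ⟨z1, z2⟩ ⟨w1, w2⟩
    simp only [mulG]
    linear_combination (x1*y1*z2*w2 - x2*y2*z1*w1) * m01 + (x1*y1*z1*w2 - x1*y2*z1*w1) * m02
      + (x1*y1*z2*w1 - x2*y1*z1*w1) * m03 + (x2*y2*z1*w2 - x1*y2*z2*w2) * m12
      + (x2*y2*z2*w1 - x2*y1*z2*w2) * m13 + (x1*y2*z2*w1 - x2*y1*z1*w2) * m23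
  obtain ⟨⟨e1, e2⟩, hli⟩ := hS
  rcases hf : mulG a₁ b₁ a₂ b₂ a₃ b₃ a₄ b₄ (e1, e2) (e1, e2) with ⟨f1, f2⟩
  rw [hf] at hli
  have hD : e1 * f2 - e2 * f1 ≠ 0 := by
    intro h0
    rw [LinearIndependent.pair_iff] at hli
    have A := hli f2 (-e2) (by ext <;> simp <;> first | ring1 | linear_combination h0 | linear_combination -h0)
    have B := hli f1 (-e1) (by ext <;> simp <;> first | ring1 | linear_combination h0 | linear_combination -h0)
    have C := hli 1 0
    have e1z : e1 = 0 := by simpa using B.2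
    have e2z : e2 = 0 := by simpa using A.2
    have := C (by simp [e1z, e2z])
    simp at this
  have hf0 : f1 ≠ 0 ∨ f2 ≠ 0 := by
    by_contra! hc
    apply hD
    rw [hc.1, hc.2]; ring
  have hex : ∀ z w, ∃ c, mulG a₁ b₁ a₂ b₂ a₃ b₃ a₄ b₄ z w = (c * f1, c * f2) := by
    intro z w
    have := hpar (e1, e2) (e1, e2) z w
    rw [hf] at this
    obtain ⟨c, h1, h2⟩ := aux_par _ _ _ _ hf0 this
    exact ⟨c, Prod.ext h1 h2⟩
  obtain ⟨q, hq⟩ := hex (f1, f2) (f1, f2)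
  obtain ⟨b, hb⟩ := hex (e1, e2) (f1, f2)
  obtain ⟨d, hd⟩ := hex (f1, f2) (e1, e2)
  have hsc := aux_iso_scale a₁ b₁ a₂ b₂ a₃ b₃ a₄ b₄ e1 e2 f1 f2 q b d hD hf hq hb hd
  have hcan : ∀ c c' : K, c * f1 = c' * f1 → c * f2 = c' * f2 → c = c' := by
    intro c c' h1 h2
    rcases hf0 with h | h
    · exact mul_right_cancel₀ h h1
    · exact mul_right_cancel₀ h h2
  -- squares of multiples of f
  have hff : ∀ s t : K, mulG a₁ b₁ a₂ b₂ a₃ b₃ a₄ b₄ (s * f1, s * f2) (t * f1, t * f2) =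
      ((s * t * q) * f1, (s * t * q) * f2) := by
    intro s t
    simp only [mulG, Prod.mk.injEq] at hq
    ext <;> simp only [mulG]
    · linear_combination s * t * hq.1
    · linear_combination s * t * hq.2
  by_cases hq0 : q = 0
  · subst hq0
    simp only [mul_zero] at hsc
    by_cases hb0 : b = 0
    · subst hb0
      by_cases hd0 : d = 0
      · subst hd0
        left
        simpa using hsc 1 one_ne_zero
      · right; left
        simpa [hd0] using hsc d⁻¹ (inv_ne_zero hd0)
    · right; right; left
      exact ⟨b⁻¹ * d, by simpa [hb0] using hsc b⁻¹ (inv_ne_zero hb0)⟩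
  · right; right; right
    have E1 := hEC (e1, e2) (f1, f2)
    rw [hb, hf, hq, hff] at E1
    have E1' : b * b * q = q * q := by
      have h := hff 1 q
      simp only [one_mul] at h
      rw [h] at E1
      simp only [Prod.mk.injEq] at E1
      exact hcan _ _ E1.1 E1.2
    have hbq : b * b = q := mul_right_cancel₀ hq0 E1'
    have hg1 : mulG a₁ b₁ a₂ b₂ a₃ b₃ a₄ b₄ (e1, e2) (e1 + f1, e2 + f2) =
        ((1 + b) * f1, (1 + b) * f2) := by
      simp only [mulG, Prod.mk.injEq] at hf hb
      ext <;> simp only [mulG]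
      · linear_combination hf.1 + hb.1
      · linear_combination hf.2 + hb.2
    have hg2 : mulG a₁ b₁ a₂ b₂ a₃ b₃ a₄ b₄ (e1 + f1, e2 + f2) (e1 + f1, e2 + f2) =
        ((1 + b + d + q) * f1, (1 + b + d + q) * f2) := by
      simp only [mulG, Prod.mk.injEq] at hf hb hd hq
      ext <;> simp only [mulG]
      · linear_combination hf.1 + hb.1 + hd.1 + hq.1
      · linear_combination hf.2 + hb.2 + hd.2 + hq.2
    have E2 := hEC (e1, e2) (e1 + f1, e2 + f2)
    have h := hff 1 (1 + b + d + q)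
    simp only [one_mul] at h
    rw [hg1, hg2, hf, hff, h] at E2
    simp only [Prod.mk.injEq] at E2
    have E2' := mul_right_cancel₀ hq0 (hcan _ _ E2.1 E2.2)
    have hdb : d = b := by linear_combination -E2' + hbq
    subst hdb
    have hb0 : d ≠ 0 := by
      rintro rfl
      apply hq0
      rw [← hbq]; ring
    have := hsc d⁻¹ (inv_ne_zero hb0)
    have e : d⁻¹ ^ 2 * q = 1 := by rw [← hbq]; field_simp
    rw [e, inv_mul_cancel₀ hb0] at this
    exact this

/-- Classification: every 2-dimensional endo-commutative straight algebra of rank 1 over K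
is isomorphic to exactly one of S(0,0,0,0,0,0), S(0,0,0,0,0,1), S(0,0,0,1,0,λ) (λ ∈ K),
S(0,1,0,1,0,1), and these are pairwise non-isomorphic. -/
theorem stmt15 {K : Type*} [Field K] :
    (∀ a₁ b₁ a₂ b₂ a₃ b₃ a₄ b₄ : K,
      IsEC (mulG a₁ b₁ a₂ b₂ a₃ b₃ a₄ b₄) →
      IsStraight (mulG a₁ b₁ a₂ b₂ a₃ b₃ a₄ b₄) →
      (structMatrix a₁ b₁ a₂ b₂ a₃ b₃ a₄ b₄).rank = 1 →
      (AlgIso (mulG a₁ b₁ a₂ b₂ a₃ b₃ a₄ b₄) (mulS 0 0 0 0 0 0) ∨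
       AlgIso (mulG a₁ b₁ a₂ b₂ a₃ b₃ a₄ b₄) (mulS 0 0 0 0 0 1) ∨
       (∃ l : K, AlgIso (mulG a₁ b₁ a₂ b₂ a₃ b₃ a₄ b₄) (mulS 0 0 0 1 0 l)) ∨
       AlgIso (mulG a₁ b₁ a₂ b₂ a₃ b₃ a₄ b₄) (mulS 0 1 0 1 0 1))) ∧
    -- pairwise non-isomorphic
    (¬ AlgIso (mulS (0:K) 0 0 0 0 0) (mulS 0 0 0 0 0 1)) ∧
    (∀ l : K, ¬ AlgIso (mulS (0:K) 0 0 0 0 0) (mulS 0 0 0 1 0 l)) ∧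
    (¬ AlgIso (mulS (0:K) 0 0 0 0 0) (mulS 0 1 0 1 0 1)) ∧
    (∀ l : K, ¬ AlgIso (mulS (0:K) 0 0 0 0 1) (mulS 0 0 0 1 0 l)) ∧
    (¬ AlgIso (mulS (0:K) 0 0 0 0 1) (mulS 0 1 0 1 0 1)) ∧
    (∀ l l' : K, l ≠ l' → ¬ AlgIso (mulS (0:K) 0 0 1 0 l) (mulS 0 0 0 1 0 l')) ∧
    (∀ l : K, ¬ AlgIso (mulS (0:K) 0 0 1 0 l) (mulS 0 1 0 1 0 1)) := by
  refine ⟨aux_class, fun h => ?_, fun l h => ?_, fun h => ?_, fun l h => ?_, fun h => ?_,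
    fun l l' hl h => ?_, fun l h => ?_⟩
  · obtain ⟨-, α, hα, h1, h2⟩ := aux_noniso _ _ _ _ _ h
    exact hα (by linear_combination -h2)
  · obtain ⟨-, α, hα, h1, h2⟩ := aux_noniso _ _ _ _ _ h
    exact hα (by linear_combination -h1)
  · exact one_ne_zero (aux_noniso _ _ _ _ _ h).1
  · obtain ⟨-, α, hα, h1, h2⟩ := aux_noniso _ _ _ _ _ h
    exact hα (by linear_combination -h1)
  · exact one_ne_zero (aux_noniso _ _ _ _ _ h).1
  · obtain ⟨-, α, hα, h1, h2⟩ := aux_noniso _ _ _ _ _ h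
    apply hl
    rw [mul_one] at h1
    rw [h2, ← h1, one_mul]
  · exact one_ne_zero (aux_noniso _ _ _ _ _ h).1
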